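/- For every n ≥ 2 there is no lattice embedding of H_n into H_1, i.e., no injective map from the free Heyting algebra on n generators into the free Heyting algebra on one generator that preserves ∧ and ∨. -/

import Mathlib

/-!
`H_1` is the Rieger–Nishimura lattice, which has width two, whereas `H_n` for `n ≥ 2` contains
three pairwise incomparable elements (`x ∧ y`, `x ∧ ¬y`, `¬x ∧ y`).  An injective map preserving
`∧` reflects the order, so it carries antichains to antichains and cannot exist.

For the width of `H_1`, fix an element `p` of a Heyting algebra and define `rnA`, `rnB` by
`a₀ = ⊥`, `a₁ = p`, `aₖ₊₂ = aₖ₊₁ ⊔ bₖ` and `b₀ = ¬p`, `bₖ₊₁ = bₖ ⇨ aₖ`.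
In the Rieger–Nishimura ladder (points `0, 1, 2, …`, where `j` is strictly above `i` iff
`j + 2 ≤ i`) the element `aₖ` is the up-set `{0, …, k - 1}` and `bₖ` is the up-set
`{0, …, k - 1} ∪ {k + 1}`.  The set of all `aₖ`, all `bₖ` and `⊤` contains `⊥` and `p` and is
closed under `⊓`, `⊔`, `⇨` (`InRN.inf`, `InRN.sup`, `InRN.himp`), hence it exhausts `H_1`.
Incomparable pairs are at most `aₖ₊₁, bₖ` and `bₖ, bₖ₊₁`, and these contain no triangle
(`InRN.no_antichain`).
-/

/-! ### Formulas, provability and the Lindenbaum algebra -/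

/-- Propositional formulas over a set `V` of variables, built from `∧, ∨, →, ⊥, ⊤`.
`¬φ` is the abbreviation `φ → ⊥`. -/
inductive PropForm (V : Type) : Type
  | var : V → PropForm V
  | bot : PropForm V
  | top : PropForm V
  | and : PropForm V → PropForm V → PropForm V
  | or : PropForm V → PropForm V → PropForm V
  | imp : PropForm V → PropForm V → PropForm V

/-- A natural-deduction style consequence relation.  When the parameter `cl` is `False`
this is exactly the consequence relation `⊢` of intuitionistic propositional logic;
when `cl` is `True` the rule of excluded middle becomes available and it is the
consequence relation `⊢_C` of classical propositional logic. -/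
inductive Prov {V : Type} (cl : Prop) : Set (PropForm V) → PropForm V → Prop
  | ax : ∀ {Γ : Set (PropForm V)} {φ}, φ ∈ Γ → Prov cl Γ φ
  | topI : ∀ {Γ}, Prov cl Γ .top
  | botE : ∀ {Γ φ}, Prov cl Γ .bot → Prov cl Γ φ
  | andI : ∀ {Γ φ ψ}, Prov cl Γ φ → Prov cl Γ ψ → Prov cl Γ (.and φ ψ)
  | andE1 : ∀ {Γ φ ψ}, Prov cl Γ (.and φ ψ) → Prov cl Γ φ
  | andE2 : ∀ {Γ φ ψ}, Prov cl Γ (.and φ ψ) → Prov cl Γ ψ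
  | orI1 : ∀ {Γ φ ψ}, Prov cl Γ φ → Prov cl Γ (.or φ ψ)
  | orI2 : ∀ {Γ φ ψ}, Prov cl Γ ψ → Prov cl Γ (.or φ ψ)
  | orE : ∀ {Γ φ ψ χ}, Prov cl Γ (.or φ ψ) → Prov cl (insert φ Γ) χ →
      Prov cl (insert ψ Γ) χ → Prov cl Γ χ
  | impI : ∀ {Γ φ ψ}, Prov cl (insert φ Γ) ψ → Prov cl Γ (.imp φ ψ)
  | impE : ∀ {Γ φ ψ}, Prov cl Γ (.imp φ ψ) → Prov cl Γ φ → Prov cl Γ ψ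
  | em : ∀ {Γ φ}, cl → Prov cl Γ (.or φ (.imp φ .bot))

/-- Intuitionistic consequence `Γ ⊢ φ`. -/
abbrev IProv {V : Type} (Γ : Set (PropForm V)) (φ : PropForm V) : Prop := Prov False Γ φ

/-- Classical consequence `Γ ⊢_C φ`. -/
abbrev CProv {V : Type} (Γ : Set (PropForm V)) (φ : PropForm V) : Prop := Prov True Γ φ

theorem Prov.mono {V : Type} {cl : Prop} {Γ : Set (PropForm V)} {φ : PropForm V}
    (h : Prov cl Γ φ) : ∀ {Δ : Set (PropForm V)}, Γ ⊆ Δ → Prov cl Δ φ := by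
  induction h with
  | ax hmem => intro Δ hsub; exact Prov.ax (hsub hmem)
  | topI => intro Δ _; exact Prov.topI
  | botE _ ih => intro Δ hsub; exact Prov.botE (ih hsub)
  | andI _ _ ih1 ih2 => intro Δ hsub; exact Prov.andI (ih1 hsub) (ih2 hsub)
  | andE1 _ ih => intro Δ hsub; exact Prov.andE1 (ih hsub)
  | andE2 _ ih => intro Δ hsub; exact Prov.andE2 (ih hsub)
  | orI1 _ ih => intro Δ hsub; exact Prov.orI1 (ih hsub)
  | orI2 _ ih => intro Δ hsub; exact Prov.orI2 (ih hsub)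
  | orE _ _ _ ih1 ih2 ih3 =>
      intro Δ hsub
      exact Prov.orE (ih1 hsub) (ih2 (Set.insert_subset_insert hsub))
        (ih3 (Set.insert_subset_insert hsub))
  | impI _ ih => intro Δ hsub; exact Prov.impI (ih (Set.insert_subset_insert hsub))
  | impE _ _ ih1 ih2 => intro Δ hsub; exact Prov.impE (ih1 hsub) (ih2 hsub)
  | em hcl => intro Δ _; exact Prov.em hcl

theorem Prov.cut {V : Type} {cl : Prop} {Γ : Set (PropForm V)} {φ ψ : PropForm V}
    (h1 : Prov cl Γ φ) (h2 : Prov cl (insert φ Γ) ψ) : Prov cl Γ ψ :=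
  Prov.impE (Prov.impI h2) h1

/-- Single-premise consequence: `φ ⊢ ψ` (intuitionistic when `cl = False`). -/
def Entails {V : Type} (cl : Prop) (φ ψ : PropForm V) : Prop := Prov cl {φ} ψ

theorem Entails.refl {V : Type} {cl : Prop} (φ : PropForm V) : Entails cl φ φ := Prov.ax rfl

theorem Entails.trans' {V : Type} {cl : Prop} {φ ψ χ : PropForm V}
    (h1 : Entails cl φ ψ) (h2 : Entails cl ψ χ) : Entails cl φ χ :=
  Prov.cut h1 (h2.mono (Set.singleton_subset_iff.mpr (Set.mem_insert _ _)))

theorem Entails.and_congr {V : Type} {cl : Prop} {a b c d : PropForm V}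
    (h1 : Entails cl a b) (h2 : Entails cl c d) :
    Entails cl (PropForm.and a c) (PropForm.and b d) := by
  have ha : Prov cl ({PropForm.and a c} : Set (PropForm V)) a := Prov.andE1 (Prov.ax rfl)
  have hc : Prov cl ({PropForm.and a c} : Set (PropForm V)) c := Prov.andE2 (Prov.ax rfl)
  exact Prov.andI
    (Prov.cut ha (h1.mono (Set.singleton_subset_iff.mpr (Set.mem_insert _ _))))
    (Prov.cut hc (h2.mono (Set.singleton_subset_iff.mpr (Set.mem_insert _ _))))

theorem Entails.or_congr {V : Type} {cl : Prop} {a b c d : PropForm V}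
    (h1 : Entails cl a b) (h2 : Entails cl c d) :
    Entails cl (PropForm.or a c) (PropForm.or b d) :=
  Prov.orE (Prov.ax rfl)
    (Prov.orI1 (h1.mono (Set.singleton_subset_iff.mpr (Set.mem_insert _ _))))
    (Prov.orI2 (h2.mono (Set.singleton_subset_iff.mpr (Set.mem_insert _ _))))

/-- Logical equivalence (intuitionistic when `cl = False`, classical when `cl = True`). -/
def provSetoid (cl : Prop) (V : Type) : Setoid (PropForm V) where
  r φ ψ := Entails cl φ ψ ∧ Entails cl ψ φ
  iseqv := ⟨fun φ => ⟨Entails.refl φ, Entails.refl φ⟩, fun h => ⟨h.2, h.1⟩,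
    fun h1 h2 => ⟨h1.1.trans' h2.1, h2.2.trans' h1.2⟩⟩

/-- The Lindenbaum algebra of formulas over `V` modulo logical equivalence.
`Lindenbaum False (Fin n)` is the free Heyting algebra `H_n`,
`Lindenbaum False ℕ` is `H_ω`, and `Lindenbaum True ℕ` is the free Boolean
algebra `B_ω`. -/
def Lindenbaum (cl : Prop) (V : Type) : Type := Quotient (provSetoid cl V)

/-- The equivalence class of a formula. -/
def Lindenbaum.mk (cl : Prop) {V : Type} (φ : PropForm V) : Lindenbaum cl V :=
  Quotient.mk (provSetoid cl V) φ

/-- The order of the Lindenbaum algebra: `[φ] ≤ [ψ]` iff `φ ⊢ ψ`. -/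
def Lindenbaum.le {cl : Prop} {V : Type} : Lindenbaum cl V → Lindenbaum cl V → Prop :=
  Quotient.lift₂ (Entails cl) (by
    intro a b a' b' ha hb
    obtain ⟨ha1, ha2⟩ := ha
    obtain ⟨hb1, hb2⟩ := hb
    exact propext ⟨fun h => (ha2.trans' h).trans' hb1, fun h => (ha1.trans' h).trans' hb2⟩)

/-- The meet `∧` of the Lindenbaum algebra. -/
def Lindenbaum.inf {cl : Prop} {V : Type} :
    Lindenbaum cl V → Lindenbaum cl V → Lindenbaum cl V :=
  Quotient.map₂ PropForm.and (by
    intro a a' ha b b' hb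
    obtain ⟨ha1, ha2⟩ := ha
    obtain ⟨hb1, hb2⟩ := hb
    exact ⟨ha1.and_congr hb1, ha2.and_congr hb2⟩)

/-- The join `∨` of the Lindenbaum algebra. -/
def Lindenbaum.sup {cl : Prop} {V : Type} :
    Lindenbaum cl V → Lindenbaum cl V → Lindenbaum cl V :=
  Quotient.map₂ PropForm.or (by
    intro a a' ha b b' hb
    obtain ⟨ha1, ha2⟩ := ha
    obtain ⟨hb1, hb2⟩ := hb
    exact ⟨ha1.or_congr hb1, ha2.or_congr hb2⟩)

/-! ### The Rieger–Nishimura sequence in a Heyting algebra -/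

section RN

variable {α : Type*} [HeytingAlgebra α] {p x y z : α}

mutual
/-- The elements `aₖ` of the Rieger–Nishimura lattice generated by `p`: in the ladder, the
initial segment of length `k`. -/
def rnA (p : α) : ℕ → α
  | 0 => ⊥
  | 1 => p
  | k + 2 => rnA p (k + 1) ⊔ rnB p k
/-- The elements `bₖ` of the Rieger–Nishimura lattice generated by `p`: in the ladder, the
principal up-set of the point `k + 1`. -/
def rnB (p : α) : ℕ → α
  | 0 => pᶜ
  | k + 1 => rnB p k ⇨ rnA p k
end

theorem rnA_le_succ (k : ℕ) : rnA p k ≤ rnA p (k + 1) := by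
  cases k with
  | zero => simp [rnA]
  | succ k => rw [rnA]; exact le_sup_left

theorem rnA_mono {k m : ℕ} (h : k ≤ m) : rnA p k ≤ rnA p m :=
  monotone_nat_of_le_succ (fun k => rnA_le_succ k) h

theorem rnA_succ_inf_rnB_le (k : ℕ) : rnA p (k + 1) ⊓ rnB p k ≤ rnA p k := by
  cases k with
  | zero => simp [rnA, rnB]
  | succ k =>
    rw [rnA, rnB, inf_sup_right, inf_himp]
    exact sup_le inf_le_left (inf_le_right.trans (rnA_le_succ k))

theorem rnA_le_rnB_self (k : ℕ) : rnA p k ≤ rnB p k := by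
  cases k with
  | zero => simp [rnA]
  | succ k => rw [rnB, le_himp_iff]; exact rnA_succ_inf_rnB_le k

theorem rnA_le_rnB {k m : ℕ} (h : k ≤ m) : rnA p k ≤ rnB p m :=
  (rnA_mono h).trans (rnA_le_rnB_self m)

theorem rnB_le_rnA {k m : ℕ} (h : k + 2 ≤ m) : rnB p k ≤ rnA p m := by
  refine le_trans ?_ (rnA_mono h)
  rw [rnA]
  exact le_sup_right

theorem rnB_le_rnB {k m : ℕ} (h : k + 2 ≤ m) : rnB p k ≤ rnB p m :=
  (rnB_le_rnA h).trans (rnA_le_rnB_self m)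

theorem rnA_succ_inf_rnB (k : ℕ) : rnA p (k + 1) ⊓ rnB p k = rnA p k :=
  le_antisymm (rnA_succ_inf_rnB_le k) (le_inf (rnA_le_succ k) (rnA_le_rnB_self k))

theorem rnB_inf_rnB_succ (k : ℕ) : rnB p k ⊓ rnB p (k + 1) = rnA p k := by
  rw [show rnB p (k + 1) = rnB p k ⇨ rnA p k by rw [rnB], inf_himp]
  exact inf_eq_right.2 (rnA_le_rnB_self k)

theorem rnB_sup_rnB_succ (k : ℕ) : rnB p k ⊔ rnB p (k + 1) = rnA p (k + 3) := by
  refine le_antisymm (sup_le (rnB_le_rnA (by omega)) (rnB_le_rnA (by omega))) ?_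
  rw [rnA, rnA]
  exact sup_le (sup_le ((rnA_le_rnB_self _).trans le_sup_right) le_sup_left) le_sup_right

theorem rnA_succ_himp (k : ℕ) : rnA p (k + 1) ⇨ rnA p k = rnB p k := by
  refine le_antisymm ?_ ?_
  · cases k with
    | zero => simp [rnA, rnB]
    | succ k =>
      rw [show rnB p (k + 1) = rnB p k ⇨ rnA p k by rw [rnB], le_himp_iff]
      refine le_trans (le_inf ?_ inf_le_right) (rnA_succ_inf_rnB_le k)
      exact (inf_le_inf_left _ (rnB_le_rnA le_rfl)).trans himp_inf_le
  · rw [le_himp_iff, inf_comm]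
    exact rnA_succ_inf_rnB_le k

theorem rnB_self_himp (k : ℕ) : rnB p k ⇨ rnA p k = rnB p (k + 1) := by
  rw [rnB]

theorem rnB_himp_rnA_succ (k : ℕ) : rnB p k ⇨ rnA p (k + 1) = rnB p (k + 1) := by
  rw [← rnA_succ_himp (k + 1), rnA, sup_himp_distrib, himp_self, top_inf_eq]

theorem rnB_succ_himp (k : ℕ) : rnB p (k + 1) ⇨ rnA p k = rnB p k := by
  refine le_antisymm ?_ ?_
  · rw [← rnA_succ_himp k]
    exact himp_le_himp_right (rnA_le_rnB_self _)
  · rw [le_himp_iff, rnB_inf_rnB_succ]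

/-- In the ladder, every point outside `aₖ` is at or below `k` or `k + 1`, both in `aₖ₊₂`. -/
theorem himp_rnA_of_le {k : ℕ} (h : rnA p (k + 2) ≤ y) : y ⇨ rnA p k = rnA p k := by
  refine le_antisymm ((himp_le_himp_right h).trans ?_) le_himp
  rw [rnA, sup_himp_distrib, rnA_succ_himp, rnB_self_himp, rnB_inf_rnB_succ]

/-- Membership in the Rieger–Nishimura lattice generated by `p`. -/
def InRN (p x : α) : Prop := x = ⊤ ∨ (∃ k, x = rnA p k) ∨ ∃ k, x = rnB p k

theorem inRN_top : InRN p ⊤ := Or.inl rfl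

theorem inRN_rnA (k : ℕ) : InRN p (rnA p k) := Or.inr (Or.inl ⟨k, rfl⟩)

theorem inRN_rnB (k : ℕ) : InRN p (rnB p k) := Or.inr (Or.inr ⟨k, rfl⟩)

theorem rnA_rnB_cases (k m : ℕ) : rnA p k ≤ rnB p m ∨ rnB p m ≤ rnA p k ∨ k = m + 1 := by
  rcases Nat.lt_or_ge m k with h | h
  · rcases Nat.lt_or_ge k (m + 2) with h' | h'
    · exact Or.inr (Or.inr (by omega))
    · exact Or.inr (Or.inl (rnB_le_rnA h'))
  · exact Or.inl (rnA_le_rnB h)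

theorem rnB_rnB_cases (k m : ℕ) :
    rnB p k ≤ rnB p m ∨ rnB p m ≤ rnB p k ∨ k = m + 1 ∨ m = k + 1 := by
  rcases Nat.lt_trichotomy k m with h | rfl | h
  · rcases Nat.lt_or_ge m (k + 2) with h' | h'
    · exact Or.inr (Or.inr (Or.inr (by omega)))
    · exact Or.inl (rnB_le_rnB h')
  · exact Or.inl le_rfl
  · rcases Nat.lt_or_ge k (m + 2) with h' | h'
    · exact Or.inr (Or.inr (Or.inl (by omega)))
    · exact Or.inr (Or.inl (rnB_le_rnB h'))

/-- Any two elements of the Rieger–Nishimura lattice are comparable, or form, up to order,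
one of the pairs `aₖ₊₁, bₖ` and `bₖ, bₖ₊₁`. -/
theorem InRN.cases₂ (hx : InRN p x) (hy : InRN p y) :
    x ≤ y ∨ y ≤ x ∨ ∃ k, (x = rnA p (k + 1) ∧ y = rnB p k) ∨ (x = rnB p k ∧ y = rnA p (k + 1)) ∨
      (x = rnB p k ∧ y = rnB p (k + 1)) ∨ (x = rnB p (k + 1) ∧ y = rnB p k) := by
  rcases hx with rfl | ⟨k, rfl⟩ | ⟨k, rfl⟩
  · exact Or.inr (Or.inl le_top)
  · rcases hy with rfl | ⟨m, rfl⟩ | ⟨m, rfl⟩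
    · exact Or.inl le_top
    · exact (le_total k m).imp rnA_mono fun h => Or.inl (rnA_mono h)
    · rcases rnA_rnB_cases (p := p) k m with h | h | rfl
      · exact Or.inl h
      · exact Or.inr (Or.inl h)
      · exact Or.inr (Or.inr ⟨m, Or.inl ⟨rfl, rfl⟩⟩)
  · rcases hy with rfl | ⟨m, rfl⟩ | ⟨m, rfl⟩
    · exact Or.inl le_top
    · rcases rnA_rnB_cases (p := p) m k with h | h | rfl
      · exact Or.inr (Or.inl h)
      · exact Or.inl h
      · exact Or.inr (Or.inr ⟨k, Or.inr (Or.inl ⟨rfl, rfl⟩)⟩)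
    · rcases rnB_rnB_cases (p := p) k m with h | h | rfl | rfl
      · exact Or.inl h
      · exact Or.inr (Or.inl h)
      · exact Or.inr (Or.inr ⟨m, Or.inr (Or.inr (Or.inr ⟨rfl, rfl⟩))⟩)
      · exact Or.inr (Or.inr ⟨k, Or.inr (Or.inr (Or.inl ⟨rfl, rfl⟩))⟩)

theorem InRN.inf (hx : InRN p x) (hy : InRN p y) : InRN p (x ⊓ y) := by
  rcases hx.cases₂ hy with h | h | ⟨k, ⟨rfl, rfl⟩ | ⟨rfl, rfl⟩ | ⟨rfl, rfl⟩ | ⟨rfl, rfl⟩⟩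
  · rwa [inf_eq_left.2 h]
  · rwa [inf_eq_right.2 h]
  · rw [rnA_succ_inf_rnB]; exact inRN_rnA k
  · rw [inf_comm, rnA_succ_inf_rnB]; exact inRN_rnA k
  · rw [rnB_inf_rnB_succ]; exact inRN_rnA k
  · rw [inf_comm, rnB_inf_rnB_succ]; exact inRN_rnA k

theorem InRN.sup (hx : InRN p x) (hy : InRN p y) : InRN p (x ⊔ y) := by
  have hA (k : ℕ) : rnA p (k + 1) ⊔ rnB p k = rnA p (k + 2) := by rw [rnA]
  rcases hx.cases₂ hy with h | h | ⟨k, ⟨rfl, rfl⟩ | ⟨rfl, rfl⟩ | ⟨rfl, rfl⟩ | ⟨rfl, rfl⟩⟩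
  · rwa [sup_eq_right.2 h]
  · rwa [sup_eq_left.2 h]
  · rw [hA]; exact inRN_rnA _
  · rw [sup_comm, hA]; exact inRN_rnA _
  · rw [rnB_sup_rnB_succ]; exact inRN_rnA _
  · rw [sup_comm, rnB_sup_rnB_succ]; exact inRN_rnA _

theorem InRN.himp_rnA (hy : InRN p y) (k : ℕ) : InRN p (y ⇨ rnA p k) := by
  rcases hy with rfl | ⟨m, rfl⟩ | ⟨m, rfl⟩
  · rw [top_himp]; exact inRN_rnA k
  · rcases Nat.lt_or_ge k m with h | h
    · rcases Nat.lt_or_ge m (k + 2) with h' | h'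
      · obtain rfl : m = k + 1 := by omega
        rw [rnA_succ_himp]; exact inRN_rnB k
      · rw [himp_rnA_of_le (rnA_mono h')]; exact inRN_rnA k
    · rw [himp_eq_top_iff.2 (rnA_mono h)]; exact inRN_top
  · rcases Nat.lt_or_ge m (k + 2) with h | h
    · rcases Nat.lt_or_ge k (m + 2) with h' | h'
      · obtain rfl | rfl | rfl : k = m + 1 ∨ k = m ∨ m = k + 1 := by omega
        · rw [rnB_himp_rnA_succ]; exact inRN_rnB _
        · rw [rnB_self_himp]; exact inRN_rnB _
        · rw [rnB_succ_himp]; exact inRN_rnB _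
      · rw [himp_eq_top_iff.2 (rnB_le_rnA h')]; exact inRN_top
    · rw [himp_rnA_of_le (rnA_le_rnB h)]; exact inRN_rnA k

theorem InRN.himp (hy : InRN p y) (hx : InRN p x) : InRN p (y ⇨ x) := by
  rcases hx with rfl | ⟨k, rfl⟩ | ⟨k, rfl⟩
  · rw [himp_top]; exact inRN_top
  · exact hy.himp_rnA k
  · -- Each `bₖ` is an implication `c ⇨ aⱼ` within the lattice, so currying removes it.
    cases k with
    | zero =>
      rw [← rnA_succ_himp, himp_himp]
      exact (hy.inf (inRN_rnA _)).himp_rnA 0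
    | succ k =>
      rw [← rnB_self_himp, himp_himp]
      exact (hy.inf (inRN_rnB _)).himp_rnA k

/-- The Rieger–Nishimura lattice has no antichain of size three. -/
theorem InRN.no_antichain (hx : InRN p x) (hy : InRN p y) (hz : InRN p z)
    (hxy : ¬ x ≤ y) (hyx : ¬ y ≤ x) (hxz : ¬ x ≤ z) (hzx : ¬ z ≤ x)
    (hyz : ¬ y ≤ z) (hzy : ¬ z ≤ y) : False := by
  have aa (k m : ℕ) : rnA p k ≤ rnA p m ∨ rnA p m ≤ rnA p k :=
    (le_total k m).imp rnA_mono rnA_mono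
  have ab := rnA_rnB_cases (p := p)
  have bb := rnB_rnB_cases (p := p)
  have bs (k : ℕ) : rnB p k ≤ rnB p (k + 2) := rnB_le_rnB le_rfl
  rcases hx with rfl | ⟨i, rfl⟩ | ⟨i, rfl⟩
  · exact hyx le_top
  all_goals
    rcases hy with rfl | ⟨j, rfl⟩ | ⟨j, rfl⟩
    · exact hxy le_top
  all_goals
    rcases hz with rfl | ⟨k, rfl⟩ | ⟨k, rfl⟩
    · exact hxz le_top
  all_goals grind

end RN

/-! ### The Heyting algebra structure of the Lindenbaum algebra -/

namespace Lindenbaum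

variable {V : Type}

theorem entails_imp_iff {cl : Prop} {φ ψ χ : PropForm V} :
    Entails cl φ (.imp ψ χ) ↔ Entails cl (.and φ ψ) χ := by
  constructor
  · intro h
    have h' : Entails cl (.and φ ψ) (.imp ψ χ) :=
      Entails.trans' (Prov.andE1 (Prov.ax rfl)) h
    exact Prov.impE h' (Prov.andE2 (Prov.ax rfl))
  · intro h
    refine Prov.impI (Prov.cut (φ := .and φ ψ) ?_ (h.mono (by simp)))
    exact Prov.andI (Prov.ax (by simp)) (Prov.ax (by simp))

theorem entails_imp_congr {cl : Prop} {a b c d : PropForm V}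
    (h1 : Entails cl b a) (h2 : Entails cl c d) :
    Entails cl (PropForm.imp a c) (PropForm.imp b d) :=
  entails_imp_iff.2 (((Entails.refl _).and_congr h1).trans'
    ((entails_imp_iff.1 (Entails.refl _)).trans' h2))

/-- The implication of the Lindenbaum algebra. -/
def imp {cl : Prop} : Lindenbaum cl V → Lindenbaum cl V → Lindenbaum cl V :=
  Quotient.map₂ PropForm.imp (by
    intro a a' ha b b' hb
    exact ⟨entails_imp_congr ha.2 hb.1, entails_imp_congr ha.1 hb.2⟩)

instance {cl : Prop} : HeytingAlgebra (Lindenbaum cl V) where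
  le := Lindenbaum.le
  le_refl a := by induction a using Quotient.ind; exact Entails.refl _
  le_trans a b c := by
    induction a using Quotient.ind
    induction b using Quotient.ind
    induction c using Quotient.ind
    exact Entails.trans'
  le_antisymm a b := by
    induction a using Quotient.ind
    induction b using Quotient.ind
    exact fun h1 h2 => Quotient.sound ⟨h1, h2⟩
  inf := Lindenbaum.inf
  sup := Lindenbaum.sup
  inf_le_left a b := by
    induction a using Quotient.ind
    induction b using Quotient.ind
    exact Prov.andE1 (Prov.ax rfl)
  inf_le_right a b := by
    induction a using Quotient.ind
    induction b using Quotient.ind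
    exact Prov.andE2 (Prov.ax rfl)
  le_inf a b c := by
    induction a using Quotient.ind
    induction b using Quotient.ind
    induction c using Quotient.ind
    exact Prov.andI
  le_sup_left a b := by
    induction a using Quotient.ind
    induction b using Quotient.ind
    exact Prov.orI1 (Prov.ax rfl)
  le_sup_right a b := by
    induction a using Quotient.ind
    induction b using Quotient.ind
    exact Prov.orI2 (Prov.ax rfl)
  sup_le a b c := by
    induction a using Quotient.ind
    induction b using Quotient.ind
    induction c using Quotient.ind
    exact fun h1 h2 => Prov.orE (Prov.ax rfl) (h1.mono (by simp)) (h2.mono (by simp))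
  top := mk cl .top
  le_top a := by induction a using Quotient.ind; exact Prov.topI
  bot := mk cl .bot
  bot_le a := by induction a using Quotient.ind; exact Prov.botE (Prov.ax rfl)
  himp := imp
  le_himp_iff a b c := by
    induction a using Quotient.ind
    induction b using Quotient.ind
    induction c using Quotient.ind
    exact entails_imp_iff
  compl a := imp a (mk cl .bot)
  himp_bot _ := rfl

/-- `H_1` is exhausted by the Rieger–Nishimura lattice of its generator. -/
theorem inRN_all {cl : Prop} (a : Lindenbaum cl (Fin 1)) : InRN (mk cl (.var 0)) a := by
  induction a using Quotient.ind with
  | _ φ =>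
    change InRN _ (mk cl φ)
    induction φ with
    | var i =>
      obtain rfl : i = 0 := Subsingleton.elim _ _
      exact Or.inr (Or.inl ⟨1, by rw [rnA]⟩)
    | bot => exact Or.inr (Or.inl ⟨0, by rw [rnA]; rfl⟩)
    | top => exact Or.inl rfl
    | and φ ψ h1 h2 => exact h1.inf h2
    | or φ ψ h1 h2 => exact h1.sup h2
    | imp φ ψ h1 h2 => exact h1.himp h2

end Lindenbaum

/-! ### Classical valuations and an antichain in `H_n` -/

/-- The truth value of a formula under a classical valuation. -/
def PropForm.eval {V : Type} (v : V → Prop) : PropForm V → Prop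
  | .var i => v i
  | .bot => False
  | .top => True
  | .and φ ψ => φ.eval v ∧ ψ.eval v
  | .or φ ψ => φ.eval v ∨ ψ.eval v
  | .imp φ ψ => φ.eval v → ψ.eval v

theorem Prov.sound {V : Type} {cl : Prop} (v : V → Prop) {Γ : Set (PropForm V)} {φ : PropForm V}
    (h : Prov cl Γ φ) : (∀ ψ ∈ Γ, ψ.eval v) → φ.eval v := by
  induction h <;> simp_all [PropForm.eval] <;> tauto

theorem Entails.sound {V : Type} {cl : Prop} (v : V → Prop) {φ ψ : PropForm V}
    (h : Entails cl φ ψ) (hφ : φ.eval v) : ψ.eval v :=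
  Prov.sound v h (by simpa using hφ)

/-- For every `n ≥ 2` there is no lattice embedding of `H_n` into `H_1`: no injective map
from the free Heyting algebra on `n` generators into the free Heyting algebra on one
generator preserving `∧` and `∨`. -/
theorem no_lattice_embedding_Hn_into_H1 (n : ℕ) (hn : 2 ≤ n) :
    ¬∃ f : Lindenbaum False (Fin n) → Lindenbaum False (Fin 1),
      Function.Injective f ∧
      (∀ a b, f (Lindenbaum.inf a b) = Lindenbaum.inf (f a) (f b)) ∧
      (∀ a b, f (Lindenbaum.sup a b) = Lindenbaum.sup (f a) (f b)) := by
  rintro ⟨f, hf, hinf, -⟩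
  have hrefl (φ ψ : PropForm (Fin n))
      (h : f (Lindenbaum.mk False φ) ≤ f (Lindenbaum.mk False ψ)) : Entails False φ ψ := by
    have h1 : f (Lindenbaum.inf (Lindenbaum.mk False φ) (Lindenbaum.mk False ψ)) =
        f (Lindenbaum.mk False φ) := (hinf _ _).trans (inf_eq_left.2 h)
    exact inf_eq_left.1 (hf h1)
  let i : Fin n := ⟨0, by omega⟩
  let j : Fin n := ⟨1, by omega⟩
  have hij : i ≠ j := by simp [i, j]
  let x : PropForm (Fin n) := .and (.var i) (.var j)
  let y : PropForm (Fin n) := .and (.var i) (.imp (.var j) .bot)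
  let z : PropForm (Fin n) := .and (.imp (.var i) .bot) (.var j)
  -- Each of `x`, `y`, `z` is true, and the other two false, under one of these valuations.
  have hx (h : Entails False x y ∨ Entails False x z) : False := by
    rcases h with h | h <;> simpa [x, y, z, PropForm.eval] using h.sound (fun _ => True)
  have hy (h : Entails False y x ∨ Entails False y z) : False := by
    rcases h with h | h <;>
      simpa [x, y, z, PropForm.eval, hij, hij.symm] using h.sound (fun k => k = i)
  have hz (h : Entails False z x ∨ Entails False z y) : False := by
    rcases h with h | h <;>
      simpa [x, y, z, PropForm.eval, hij, hij.symm] using h.sound (fun k => k = j)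
  exact InRN.no_antichain
    (Lindenbaum.inRN_all (f (Lindenbaum.mk False x)))
    (Lindenbaum.inRN_all (f (Lindenbaum.mk False y)))
    (Lindenbaum.inRN_all (f (Lindenbaum.mk False z)))
    (fun h => hx (Or.inl (hrefl _ _ h))) (fun h => hy (Or.inl (hrefl _ _ h)))
    (fun h => hx (Or.inr (hrefl _ _ h))) (fun h => hz (Or.inl (hrefl _ _ h)))
    (fun h => hy (Or.inr (hrefl _ _ h))) (fun h => hz (Or.inr (hrefl _ _ h)))
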